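/- The second fundamental form of the Killing graph Σ of u, computed with respect to the unit normal N = (1/W)(γY − ϑ_*∇u) in the graph coordinates X_*(∂/∂x^i) = ∂/∂x^i + u_i ∂/∂x^0, has local components a_{ij} = u_{i;j}/W − (u_i/W)γ⟨∇̄_Y Y, ∂/∂x^j⟩ − (u_j/W)γ⟨∇̄_Y Y, ∂/∂x^i⟩ − (u_i u_j/W)⟨∇̄_Y Y, ∇u⟩, equivalently a_{ij} = u_{i;j}/W − (u_i/W)(γ_j/(2γ)) − (u_j/W)(γ_i/(2γ)) − (u_i u_j/(2W)) u^k γ_k/γ². -/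

import Mathlib

/-!
Formalization of the setting of "Mean curvature flow of Killing graphs"
(Lira–Wanderley).  The integral leaf `P` of the distribution orthogonal to the
Killing field `Y` is presented in coordinates as `ℝⁿ` (points `Fin n → ℝ`)
carrying a Riemannian metric `σ`; the ambient manifold is the warped product
`M = P ×_{1/√γ} ℝ` with coordinates `(x⁰ = s, x)` and metric
`ḡ = σ + (1/γ) ds²`, where `γ = 1/|Y|²` and `Y = ∂/∂x⁰`.  All geometric
quantities (Christoffel symbols, second fundamental form and mean curvature of
a Killing graph, ambient Ricci curvature, …) are defined concretely from this
data.
-/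

noncomputable section

open Real MeasureTheory Filter Topology

namespace KMCF

variable {n : ℕ}

/-- Partial derivative of a function on the coordinate chart of the leaf `P`. -/
def pd (f : (Fin n → ℝ) → ℝ) (i : Fin n) (x : Fin n → ℝ) : ℝ :=
  fderiv ℝ f x (Pi.single i 1)

/-- Component of an ambient tangent vector `(v⁰, vⁱ)` of `M = P ×_{1/√γ} ℝ`. -/
def vComp (v : ℝ × (Fin n → ℝ)) (a : Fin (n + 1)) : ℝ :=
  if ha : a = 0 then v.1 else v.2 (a.pred ha)

/-- Ambient partial derivative (nothing depends on the flow parameter `x⁰`). -/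
def ambPd (f : (Fin n → ℝ) → ℝ) (a : Fin (n + 1)) (x : Fin n → ℝ) : ℝ :=
  if ha : a = 0 then 0 else pd f (a.pred ha) x

/-- Coordinate tangent vectors `X_* ∂_i = ∂_i + u_i ∂_0` of the Killing graph
`X(x) = ϑ(u(x), x)`. -/
def tangentV (u : (Fin n → ℝ) → ℝ) (i : Fin n) (x : Fin n → ℝ) : ℝ × (Fin n → ℝ) :=
  (pd u i x, Pi.single i 1)

/-- Coordinate data of the integral leaf `P`: the metric `σ`, its inverse, and
the warping function `γ = 1/|Y|²` of the Killing field `Y`. -/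
structure LeafData (n : ℕ) where
  σ : (Fin n → ℝ) → Fin n → Fin n → ℝ
  σInv : (Fin n → ℝ) → Fin n → Fin n → ℝ
  γ : (Fin n → ℝ) → ℝ
  σ_symm : ∀ x i j, σ x i j = σ x j i
  σ_posdef : ∀ x (v : Fin n → ℝ), v ≠ 0 → 0 < ∑ i, ∑ j, σ x i j * v i * v j
  σInv_mul_σ : ∀ x i j, (∑ k, σInv x i k * σ x k j) = if i = j then (1 : ℝ) else 0
  σ_smooth : ∀ i j, ContDiff ℝ (⊤ : ℕ∞) fun x => σ x i j
  γ_pos : ∀ x, 0 < γ x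
  γ_smooth : ContDiff ℝ (⊤ : ℕ∞) γ

namespace LeafData

variable (D : LeafData n)

/-- Christoffel symbols `Γ^k_{ij}` of the leaf metric `σ`. -/
def Γc (x : Fin n → ℝ) (i j k : Fin n) : ℝ :=
  (1 / 2) * ∑ l, D.σInv x k l *
    (pd (fun y => D.σ y j l) i x + pd (fun y => D.σ y i l) j x -
      pd (fun y => D.σ y i j) l x)

/-- Covariant Hessian `f_{i;j}` in `P`. -/
def hess (f : (Fin n → ℝ) → ℝ) (i j : Fin n) (x : Fin n → ℝ) : ℝ :=
  pd (pd f j) i x - ∑ k, D.Γc x i j k * pd f k x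

/-- Raised gradient components `f^i = σ^{ij} f_j`. -/
def gradUp (f : (Fin n → ℝ) → ℝ) (i : Fin n) (x : Fin n → ℝ) : ℝ :=
  ∑ j, D.σInv x i j * pd f j x

/-- Inner product `⟨∇f, ∇g⟩` of gradients in `P`. -/
def inner2 (f g : (Fin n → ℝ) → ℝ) (x : Fin n → ℝ) : ℝ :=
  ∑ i, ∑ j, D.σInv x i j * pd f i x * pd g j x

/-- `|∇u|²`. -/
def gradSq (u : (Fin n → ℝ) → ℝ) (x : Fin n → ℝ) : ℝ := D.inner2 u u x

/-- `W = √(γ + |∇u|²)`. -/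
def Wf (u : (Fin n → ℝ) → ℝ) (x : Fin n → ℝ) : ℝ :=
  Real.sqrt (D.γ x + D.gradSq u x)

/-- Divergence in `P` of a vector field with raised components `Z^i`. -/
def divP (Z : Fin n → (Fin n → ℝ) → ℝ) (x : Fin n → ℝ) : ℝ :=
  ∑ i, (pd (Z i) i x + ∑ k, D.Γc x i k i * Z k x)

/-- Divergence in the ambient warped product `M = P ×_{1/√γ} ℝ` of an
`s`-independent horizontal vector field (`Γ̄⁰_{0i} = −γ_i/(2γ)`). -/
def divM (Z : Fin n → (Fin n → ℝ) → ℝ) (x : Fin n → ℝ) : ℝ :=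
  D.divP Z x - ∑ i, (pd D.γ i x / (2 * D.γ x)) * Z i x

/-- The ambient warped-product metric `ḡ` of `M` in the coordinates
`(x⁰ = s, x)`:  `ḡ₀₀ = 1/γ`, `ḡ₀ᵢ = 0`, `ḡᵢⱼ = σᵢⱼ`. -/
def ambG (x : Fin n → ℝ) (a b : Fin (n + 1)) : ℝ :=
  if ha : a = 0 then (if b = 0 then 1 / D.γ x else 0)
  else if hb : b = 0 then 0 else D.σ x (a.pred ha) (b.pred hb)

/-- The inverse ambient metric. -/
def ambGInv (x : Fin n → ℝ) (a b : Fin (n + 1)) : ℝ :=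
  if ha : a = 0 then (if b = 0 then D.γ x else 0)
  else if hb : b = 0 then 0 else D.σInv x (a.pred ha) (b.pred hb)

/-- Ambient Christoffel symbols `Γ̄^a_{bc}` of the warped-product metric. -/
def ambΓ (x : Fin n → ℝ) (a b c : Fin (n + 1)) : ℝ :=
  (1 / 2) * ∑ e, D.ambGInv x a e *
    (ambPd (fun y => D.ambG y b e) c x + ambPd (fun y => D.ambG y c e) b x -
      ambPd (fun y => D.ambG y b c) e x)

/-- Ambient curvature tensor `R̄^a_{bcd}`. -/
def ambRiem (x : Fin n → ℝ) (a b c d : Fin (n + 1)) : ℝ :=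
  ambPd (fun y => D.ambΓ y a d b) c x - ambPd (fun y => D.ambΓ y a c b) d x +
    (∑ e, D.ambΓ x a c e * D.ambΓ x e d b) -
    ∑ e, D.ambΓ x a d e * D.ambΓ x e c b

/-- Ambient Ricci curvature as a bilinear form on tangent vectors of `M`. -/
def Ric (x : Fin n → ℝ) (v w : ℝ × (Fin n → ℝ)) : ℝ :=
  ∑ b, ∑ c, (∑ a, D.ambRiem x a b a c) * vComp v b * vComp w c

/-- The ambient Riemannian inner product `⟨·,·⟩` at `x`. -/
def ambInner (x : Fin n → ℝ) (v w : ℝ × (Fin n → ℝ)) : ℝ :=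
  ∑ a, ∑ b, D.ambG x a b * vComp v a * vComp w b

/-- Ambient covariant derivative `∇̄_v Z` of an `s`-independent vector field
`Z` in the direction of the tangent vector `v` at `x`. -/
def ambCov (Z : (Fin n → ℝ) → ℝ × (Fin n → ℝ)) (v : ℝ × (Fin n → ℝ))
    (x : Fin n → ℝ) : ℝ × (Fin n → ℝ) :=
  ((∑ i, v.2 i * pd (fun y => (Z y).1) i x) +
      ∑ b, ∑ c, D.ambΓ x 0 b c * vComp v b * vComp (Z x) c,
    fun k =>
      (∑ i, v.2 i * pd (fun y => (Z y).2 k) i x) +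
        ∑ b, ∑ c, D.ambΓ x k.succ b c * vComp v b * vComp (Z x) c)

/-- The unit normal `N = (1/W)(γ Y − ϑ_* ∇u)` of the Killing graph. -/
def normalN (u : (Fin n → ℝ) → ℝ) (x : Fin n → ℝ) : ℝ × (Fin n → ℝ) :=
  (D.γ x / D.Wf u x, fun k => -D.gradUp u k x / D.Wf u x)

/-- Second fundamental form `a_{ij} = ⟨∇̄_{X_*∂_i} X_*∂_j, N⟩` of the graph. -/
def sff (u : (Fin n → ℝ) → ℝ) (i j : Fin n) (x : Fin n → ℝ) : ℝ :=
  D.ambInner x (D.ambCov (fun y => tangentV u j y) (tangentV u i x) x)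
    (D.normalN u x)

/-- Induced metric `g_{ij} = σ_{ij} + u_i u_j / γ` of the graph. -/
def gmet (u : (Fin n → ℝ) → ℝ) (x : Fin n → ℝ) (i j : Fin n) : ℝ :=
  D.σ x i j + pd u i x * pd u j x / D.γ x

/-- Inverse induced metric `g^{ij} = σ^{ij} − u^i u^j / W²`. -/
def gInv (u : (Fin n → ℝ) → ℝ) (x : Fin n → ℝ) (i j : Fin n) : ℝ :=
  D.σInv x i j - D.gradUp u i x * D.gradUp u j x / (D.Wf u x) ^ 2

/-- `n` times the mean curvature of the graph: `nH = g^{ij} a_{ij}`. -/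
def nH (u : (Fin n → ℝ) → ℝ) (x : Fin n → ℝ) : ℝ :=
  ∑ i, ∑ j, D.gInv u x i j * D.sff u i j x

/-- Christoffel symbols of the induced metric of the graph. -/
def Γg (u : (Fin n → ℝ) → ℝ) (x : Fin n → ℝ) (i j k : Fin n) : ℝ :=
  (1 / 2) * ∑ l, D.gInv u x k l *
    (pd (fun y => D.gmet u y j l) i x + pd (fun y => D.gmet u y i l) j x -
      pd (fun y => D.gmet u y i j) l x)

/-- Covariant derivative `∇_k T_{ij}` in `P` of a 2-tensor. -/
def covP2 (T : Fin n → Fin n → (Fin n → ℝ) → ℝ) (k i j : Fin n)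
    (x : Fin n → ℝ) : ℝ :=
  pd (T i j) k x - ∑ l, D.Γc x k i l * T l j x - ∑ l, D.Γc x k j l * T i l x

/-- Covariant derivative `∇^Σ_k T_{ij}` on the graph of a 2-tensor. -/
def covG2 (u : (Fin n → ℝ) → ℝ) (T : Fin n → Fin n → (Fin n → ℝ) → ℝ)
    (k i j : Fin n) (x : Fin n → ℝ) : ℝ :=
  pd (T i j) k x - ∑ l, D.Γg u x k i l * T l j x - ∑ l, D.Γg u x k j l * T i l x

/-- Components of the gradient on `Σ` of a function of `x`. -/
def gradG (u f : (Fin n → ℝ) → ℝ) (j : Fin n) (x : Fin n → ℝ) : ℝ :=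
  ∑ k, D.gInv u x j k * pd f k x

/-- Components, in the basis `X_*∂_i`, of the tangential projection `Y^T`
of the Killing field:  `Y^T = (u^i/W²) X_*∂_i`. -/
def YTc (u : (Fin n → ℝ) → ℝ) (i : Fin n) (x : Fin n → ℝ) : ℝ :=
  D.gradUp u i x / (D.Wf u x) ^ 2

/-- Squared norm `|A|²` of the second fundamental form. -/
def Anorm2 (u : (Fin n → ℝ) → ℝ) (x : Fin n → ℝ) : ℝ :=
  ∑ i, ∑ j, ∑ k, ∑ l,
    D.gInv u x i k * D.gInv u x j l * D.sff u i j x * D.sff u k l x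

/-- Mixed components `a_i^j = g^{jk} a_{ik}` of the Weingarten map. -/
def aMix (u : (Fin n → ℝ) → ℝ) (i j : Fin n) (x : Fin n → ℝ) : ℝ :=
  ∑ k, D.gInv u x j k * D.sff u i k x

/-- Raised spatial components `N^j = −u^j/W` of the unit normal. -/
def NupS (u : (Fin n → ℝ) → ℝ) (j : Fin n) (x : Fin n → ℝ) : ℝ :=
  -D.gradUp u j x / D.Wf u x

/-- The support-type function `θ = ⟨∇d, N⟩`. -/
def theta (u d : (Fin n → ℝ) → ℝ) (x : Fin n → ℝ) : ℝ :=
  D.ambInner x ((0 : ℝ), fun k => D.gradUp d k x) (D.normalN u x)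

/-- `κ = ⟨γ ∇̄_Y Y, ∇d⟩ = ⟨∇γ, ∇d⟩/(2γ)`. -/
def kappa (d : (Fin n → ℝ) → ℝ) (x : Fin n → ℝ) : ℝ :=
  D.inner2 D.γ d x / (2 * D.γ x)

/-- The Korevaar auxiliary function `h = 1 + α d − ϕ ⟨∇d, N⟩`. -/
def hKor (u d ϕ : (Fin n → ℝ) → ℝ) (α : ℝ) (x : Fin n → ℝ) : ℝ :=
  1 + α * d x - ϕ x * D.theta u d x

/-- `η = e^{Ku} h`. -/
def etaKor (u d ϕ : (Fin n → ℝ) → ℝ) (K α : ℝ) (x : Fin n → ℝ) : ℝ :=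
  Real.exp (K * u x) * D.hKor u d ϕ α x

/-- Riemannian integral over `Ω ⊆ P` (density `√(det σ)`). -/
def intP (Ω : Set (Fin n → ℝ)) (f : (Fin n → ℝ) → ℝ) : ℝ :=
  ∫ x in Ω, f x * Real.sqrt (Matrix.det (Matrix.of fun i j => D.σ x i j))

/-- The nonparametric mean curvature flow equation (23):
`u_t = (σ^{ij} − u^i u^j/W²) u_{i;j} − (1/(2γ) + 1/(2W²)) γ^i u_i − W𝓗`. -/
def SolvesFlowOn (Ω : Set (Fin n → ℝ)) (J : Set ℝ) (𝓗 : (Fin n → ℝ) → ℝ)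
    (u : (Fin n → ℝ) → ℝ → ℝ) : Prop :=
  ∀ x ∈ Ω, ∀ t ∈ J,
    deriv (u x) t =
      (∑ i, ∑ j, D.gInv (fun y => u y t) x i j * D.hess (fun y => u y t) i j x) -
        (1 / (2 * D.γ x) + 1 / (2 * (D.Wf (fun y => u y t) x) ^ 2)) *
          D.inner2 D.γ (fun y => u y t) x -
        D.Wf (fun y => u y t) x * 𝓗 x

/-- The divergence form (21) of the flow equation:
`u_t = W div(∇u/W) − W𝓗 − γ⟨∇̄_Y Y, ∇u⟩`. -/
def SolvesFlowDivOn (Ω : Set (Fin n → ℝ)) (J : Set ℝ) (𝓗 : (Fin n → ℝ) → ℝ)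
    (u : (Fin n → ℝ) → ℝ → ℝ) : Prop :=
  ∀ x ∈ Ω, ∀ t ∈ J,
    deriv (u x) t =
      D.Wf (fun y => u y t) x *
          D.divP (fun i y => D.gradUp (fun z => u z t) i y /
            D.Wf (fun z => u z t) y) x -
        D.Wf (fun y => u y t) x * 𝓗 x -
        D.γ x * (D.inner2 D.γ (fun y => u y t) x / (2 * (D.γ x) ^ 2))

/-- The Neumann condition `⟨N, ν⟩ = ϕ` on `∂Ω`. -/
def NeumannOn (Ω : Set (Fin n → ℝ)) (J : Set ℝ) (ν : (Fin n → ℝ) → Fin n → ℝ)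
    (ϕ : (Fin n → ℝ) → ℝ) (u : (Fin n → ℝ) → ℝ → ℝ) : Prop :=
  ∀ x ∈ frontier Ω, ∀ t ∈ J,
    D.ambInner x (D.normalN (fun y => u y t) x) ((0 : ℝ), ν x) = ϕ x

/-- The stationary prescribed mean curvature equation (5) with the prescribed
contact angle condition (6). -/
def SolvesStationary (Ω : Set (Fin n → ℝ)) (ν : (Fin n → ℝ) → Fin n → ℝ)
    (𝓗 ϕ : (Fin n → ℝ) → ℝ) (v : (Fin n → ℝ) → ℝ) : Prop :=
  (∀ x ∈ Ω,
      D.divP (fun i y => D.gradUp v i y / D.Wf v y) x -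
          D.γ x * (D.inner2 D.γ v x / (2 * (D.γ x) ^ 2 * D.Wf v x)) = 𝓗 x) ∧
    ∀ x ∈ frontier Ω, D.ambInner x (D.normalN v x) ((0 : ℝ), ν x) = ϕ x

/-- The translating-soliton equation (41) with Neumann condition (42). -/
def SolvesSoliton (Ω : Set (Fin n → ℝ)) (ν : (Fin n → ℝ) → Fin n → ℝ)
    (𝓗 ϕ : (Fin n → ℝ) → ℝ) (C : ℝ) (v : (Fin n → ℝ) → ℝ) : Prop :=
  (∀ x ∈ Ω,
      D.divP (fun i y => D.gradUp v i y / D.Wf v y) x -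
          D.γ x * (D.inner2 D.γ v x / (2 * (D.γ x) ^ 2 * D.Wf v x)) =
        𝓗 x + C / D.Wf v x) ∧
    ∀ x ∈ frontier Ω, D.ambInner x (D.normalN v x) ((0 : ℝ), ν x) = ϕ x

end LeafData

end KMCF

namespace KMCF

open LeafData

section helpers

variable {n : ℕ}

theorem vComp_zero' (v : ℝ × (Fin n → ℝ)) : vComp v 0 = v.1 := by simp [vComp]
theorem vComp_succ' (v : ℝ × (Fin n → ℝ)) (k : Fin n) : vComp v k.succ = v.2 k := by
  simp [vComp]

theorem pd_const' (c : ℝ) (i : Fin n) (x : Fin n → ℝ) : pd (fun _ => c) i x = 0 := by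
  simp [pd]

theorem pd_inv' (D : LeafData n) (i : Fin n) (x : Fin n → ℝ) :
    pd (fun y => 1 / D.γ y) i x = -(pd D.γ i x / (D.γ x) ^ 2) := by
  have hd : DifferentiableAt ℝ D.γ x := D.γ_smooth.differentiable (by simp) x
  have h := ((hasDerivAt_inv (D.γ_pos x).ne').comp_hasFDerivAt x hd.hasFDerivAt)
  have h2 : (fun y => 1 / D.γ y) = (fun y => y⁻¹) ∘ D.γ := by ext y; simp
  unfold pd
  rw [h2, h.fderiv]
  simp; field_simp

theorem ambG00 (D : LeafData n) (x) : D.ambG x 0 0 = 1 / D.γ x := by simp [LeafData.ambG]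
theorem ambG0s (D : LeafData n) (x) (k : Fin n) : D.ambG x 0 k.succ = 0 := by
  simp [LeafData.ambG]
theorem ambGs0 (D : LeafData n) (x) (k : Fin n) : D.ambG x k.succ 0 = 0 := by
  simp [LeafData.ambG]
theorem ambGss (D : LeafData n) (x) (k l : Fin n) : D.ambG x k.succ l.succ = D.σ x k l := by
  simp [LeafData.ambG]
theorem ambGI00 (D : LeafData n) (x) : D.ambGInv x 0 0 = D.γ x := by simp [LeafData.ambGInv]
theorem ambGI0s (D : LeafData n) (x) (k : Fin n) : D.ambGInv x 0 k.succ = 0 := by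
  simp [LeafData.ambGInv]
theorem ambGIs0 (D : LeafData n) (x) (k : Fin n) : D.ambGInv x k.succ 0 = 0 := by
  simp [LeafData.ambGInv]
theorem ambGIss (D : LeafData n) (x) (k l : Fin n) :
    D.ambGInv x k.succ l.succ = D.σInv x k l := by
  simp [LeafData.ambGInv]
theorem ambPd0 (f : (Fin n → ℝ) → ℝ) (x) : ambPd f 0 x = 0 := by simp [ambPd]
theorem ambPds (f : (Fin n → ℝ) → ℝ) (k : Fin n) (x) : ambPd f k.succ x = pd f k x := by
  simp [ambPd]

theorem G000 (D : LeafData n) (x) : D.ambΓ x 0 0 0 = 0 := by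
  simp [LeafData.ambΓ, Fin.sum_univ_succ, ambGI00, ambGI0s, ambPd0]
theorem G00s (D : LeafData n) (x) (k : Fin n) :
    D.ambΓ x 0 0 k.succ = -(pd D.γ k x / (2 * D.γ x)) := by
  have := (D.γ_pos x).ne'
  simp only [LeafData.ambΓ, Fin.sum_univ_succ, ambGI00, ambGI0s, ambPd0, ambPds, ambG00, ambGs0,
    pd_inv']
  simp; field_simp
theorem G0s0 (D : LeafData n) (x) (k : Fin n) :
    D.ambΓ x 0 k.succ 0 = -(pd D.γ k x / (2 * D.γ x)) := by
  have := (D.γ_pos x).ne'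
  simp only [LeafData.ambΓ, Fin.sum_univ_succ, ambGI00, ambGI0s, ambPd0, ambPds, ambG00, ambGs0,
    pd_inv']
  simp; field_simp
theorem G0ss (D : LeafData n) (x) (k l : Fin n) : D.ambΓ x 0 k.succ l.succ = 0 := by
  simp [LeafData.ambΓ, Fin.sum_univ_succ, ambGI00, ambGI0s, ambPd0, ambPds, ambGs0, pd_const']
theorem Gs00 (D : LeafData n) (x) (k : Fin n) :
    D.ambΓ x k.succ 0 0 = (∑ l, D.σInv x k l * pd D.γ l x) / (2 * (D.γ x) ^ 2) := by
  simp only [LeafData.ambΓ, Fin.sum_univ_succ, ambGIs0, ambGIss, ambPd0, ambPds, ambG00, pd_inv',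
    Finset.mul_sum, Finset.sum_div, zero_mul, zero_add]
  exact Finset.sum_congr rfl fun l _ => by ring
theorem Gs0s (D : LeafData n) (x) (k l : Fin n) : D.ambΓ x k.succ 0 l.succ = 0 := by
  simp [LeafData.ambΓ, Fin.sum_univ_succ, ambGIs0, ambGIss, ambPd0, ambPds, ambG0s, pd_const']
theorem Gss0 (D : LeafData n) (x) (k l : Fin n) : D.ambΓ x k.succ l.succ 0 = 0 := by
  simp [LeafData.ambΓ, Fin.sum_univ_succ, ambGIs0, ambGIss, ambPd0, ambPds, ambG0s, ambGs0,
    pd_const']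
theorem Gsss (D : LeafData n) (x) (k i j : Fin n) :
    D.ambΓ x k.succ i.succ j.succ = D.Γc x i j k := by
  simp only [LeafData.ambΓ, LeafData.Γc, Fin.sum_univ_succ, ambGIs0, ambGIss, ambPds, ambGss,
    zero_mul, zero_add]
  congr 1
  exact Finset.sum_congr rfl fun l _ => by ring

theorem σ_mul_σInv (D : LeafData n) (x) (i j : Fin n) :
    (∑ k, D.σ x i k * D.σInv x k j) = if i = j then (1 : ℝ) else 0 := by
  have h : (Matrix.of (D.σInv x)) * (Matrix.of (D.σ x)) = 1 := by
    ext a b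
    simp [Matrix.mul_apply, Matrix.one_apply, D.σInv_mul_σ]
  have h1 : (Matrix.of (D.σ x)) * (Matrix.of (D.σInv x)) = 1 := mul_eq_one_comm.mp h
  have h2 := congrArg (fun M : Matrix (Fin n) (Fin n) ℝ => M i j) h1
  simpa [Matrix.mul_apply, Matrix.one_apply] using h2

theorem σ_gradUp (D : LeafData n) (f : (Fin n → ℝ) → ℝ) (x) (k : Fin n) :
    ∑ l, D.σ x k l * D.gradUp f l x = pd f k x := by
  simp only [LeafData.gradUp, Finset.mul_sum]
  rw [Finset.sum_comm]
  simp only [← mul_assoc, ← Finset.sum_mul, σ_mul_σInv]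
  simp

theorem cov0 (D : LeafData n) (u : (Fin n → ℝ) → ℝ) (x) (i j : Fin n) :
    (D.ambCov (fun y => tangentV u j y) (tangentV u i x) x).1 =
      pd (pd u j) i x - pd u i x * (pd D.γ j x / (2 * D.γ x))
        - pd u j x * (pd D.γ i x / (2 * D.γ x)) := by
  simp only [LeafData.ambCov, Fin.sum_univ_succ, vComp_zero', vComp_succ', G000, G00s, G0s0, G0ss,
    tangentV, Pi.single_apply]
  simp
  change pd (pd u j) i x + _ = _
  ring

theorem covs (D : LeafData n) (u : (Fin n → ℝ) → ℝ) (x) (i j k : Fin n) :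
    (D.ambCov (fun y => tangentV u j y) (tangentV u i x) x).2 k =
      D.Γc x i j k + pd u i x * pd u j x / (2 * (D.γ x) ^ 2) * D.gradUp D.γ k x := by
  simp only [LeafData.ambCov, Fin.sum_univ_succ, vComp_zero', vComp_succ', Gs00, Gs0s, Gss0, Gsss,
    tangentV, Pi.single_apply, pd_const', LeafData.gradUp]
  simp
  ring

theorem sff_eq (D : LeafData n) (u : (Fin n → ℝ) → ℝ) (x) (i j : Fin n) :
    D.sff u i j x =
          D.hess u i j x / D.Wf u x -
            pd u i x / D.Wf u x * (pd D.γ j x / (2 * D.γ x)) -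
            pd u j x / D.Wf u x * (pd D.γ i x / (2 * D.γ x)) -
            pd u i x * pd u j x / (2 * D.Wf u x) *
              ((∑ k, D.gradUp u k x * pd D.γ k x) / (D.γ x) ^ 2) := by
  have hg := (D.γ_pos x).ne'
  have key : ∑ k, ∑ l, D.σ x k l * (D.ambCov (fun y => tangentV u j y) (tangentV u i x) x).2 k
      * (-D.gradUp u l x / D.Wf u x) =
      -(∑ k, D.Γc x i j k * pd u k x) / D.Wf u x
      - pd u i x * pd u j x / (2 * (D.γ x) ^ 2) * (∑ k, D.gradUp u k x * pd D.γ k x)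
        / D.Wf u x := by
    have e1 : ∑ k, D.gradUp u k x * pd D.γ k x = ∑ k, D.gradUp D.γ k x * pd u k x := by
      simp only [← σ_gradUp D D.γ x, ← σ_gradUp D u x, Finset.mul_sum]
      rw [Finset.sum_comm]
      refine Finset.sum_congr rfl fun a _ => Finset.sum_congr rfl fun b _ => ?_
      rw [D.σ_symm x b a]; ring
    rw [e1]
    have e2 : ∀ k, ∑ l, D.σ x k l *
        (D.ambCov (fun y => tangentV u j y) (tangentV u i x) x).2 k
      * (-D.gradUp u l x / D.Wf u x) =
      -(D.ambCov (fun y => tangentV u j y) (tangentV u i x) x).2 k / D.Wf u x * pd u k x := by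
      intro k
      rw [← σ_gradUp D u x k, Finset.mul_sum]
      exact Finset.sum_congr rfl fun l _ => by ring
    rw [Finset.sum_congr rfl fun k _ => e2 k]
    simp only [covs, Finset.mul_sum, Finset.sum_div, ← Finset.sum_neg_distrib,
      ← Finset.sum_sub_distrib]
    exact Finset.sum_congr rfl fun l _ => by ring
  have h0 : D.sff u i j x = 1 / D.γ x *
      (D.ambCov (fun y => tangentV u j y) (tangentV u i x) x).1 * (D.γ x / D.Wf u x) +
      ∑ k, ∑ l, D.σ x k l * (D.ambCov (fun y => tangentV u j y) (tangentV u i x) x).2 k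
      * (-D.gradUp u l x / D.Wf u x) := by
    unfold LeafData.sff LeafData.ambInner
    simp only [Fin.sum_univ_succ, vComp_zero', vComp_succ', ambG00, ambG0s, ambGs0, ambGss,
      LeafData.normalN]
    simp
  rw [h0, key, cov0, LeafData.hess]
  have c : ∀ A : ℝ, 1 / D.γ x * A * (D.γ x / D.Wf u x) = A / D.Wf u x := by
    intro A; field_simp
  rw [c]
  ring

end helpers

/-- The second fundamental form of the Killing graph of `u`,
computed with respect to the unit normal `N = (1/W)(γY − ϑ_*∇u)` in the graph
coordinates `X_*∂_i = ∂_i + u_i ∂_0`, has local components given by formula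
(13), equivalently by formula (12), of the paper (here
`γ⟨∇̄_Y Y, ∂_j⟩ = γ_j/(2γ)` and `⟨∇̄_Y Y, ∇u⟩ = ⟨∇γ, ∇u⟩/(2γ²)`). -/
theorem second_fundamental_form_of_killing_graph
    {n : ℕ} (D : LeafData n) (Ω : Set (Fin n → ℝ))
    (hΩo : IsOpen Ω) (hΩb : Bornology.IsBounded Ω)
    (u : (Fin n → ℝ) → ℝ) (hu : ContDiff ℝ (⊤ : ℕ∞) u) :
    ∀ x ∈ Ω, ∀ i j : Fin n,
      (D.sff u i j x =
          D.hess u i j x / D.Wf u x -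
            pd u i x / D.Wf u x * (D.γ x * (pd D.γ j x / (2 * (D.γ x) ^ 2))) -
            pd u j x / D.Wf u x * (D.γ x * (pd D.γ i x / (2 * (D.γ x) ^ 2))) -
            pd u i x * pd u j x / D.Wf u x *
              (D.inner2 D.γ u x / (2 * (D.γ x) ^ 2))) ∧
        D.sff u i j x =
          D.hess u i j x / D.Wf u x -
            pd u i x / D.Wf u x * (pd D.γ j x / (2 * D.γ x)) -
            pd u j x / D.Wf u x * (pd D.γ i x / (2 * D.γ x)) -
            pd u i x * pd u j x / (2 * D.Wf u x) *
              ((∑ k, D.gradUp u k x * pd D.γ k x) / (D.γ x) ^ 2) := by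
  intro x _ i j
  refine ⟨?_, sff_eq D u x i j⟩
  have hg := (D.γ_pos x).ne'
  have e : D.inner2 D.γ u x = ∑ k, D.gradUp u k x * pd D.γ k x := by
    simp only [LeafData.inner2, LeafData.gradUp, Finset.sum_mul]
    exact Finset.sum_congr rfl fun a _ => Finset.sum_congr rfl fun b _ => by ring
  have c : ∀ A : ℝ, D.γ x * (A / (2 * (D.γ x) ^ 2)) = A / (2 * D.γ x) := by
    intro A; field_simp
  rw [sff_eq D u x i j, e, c, c]
  ring

end KMCF
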